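/- Let J, K be positive integers, let L : Fin J → Fin K → ℝ be a fixed matrix, and let G be a random J × K matrix whose entries are i.i.d. standard real Gaussians with law μ = Measure.pi (fun _ : Fin J × Fin K => gaussianReal 0 1). For a real J × J matrix B set Δ(B) := L ∘ G − B * G. If a matrix B attains the minimum value, i.e. ∫ ‖Δ(B)‖_F² dμ = ∑_{j<J} ( ∑_{k<K} (L j k)² − (1/K) · (∑_{k<K} L j k)² ), then B is the diagonal matrix of row means of L: B j j = (1/K) · ∑_{k<K} L j k for every j, and B j i = 0 for every i ≠ j. -/

import Mathlib

/-!
Entry `(j, k)` of `Δ(B)` is the linear form `∑ i, (δ_{ij} L j k - B j i) G i k` in independent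
standard Gaussians, so its second moment is the sum of its squared coefficients
(`integral_sq_linear_form`). Summing over `k` and completing the square, row `j` contributes its
minimum value plus `K * ∑ i, (B j i - δ_{ij} m j) ^ 2`, where `m j` is the mean of row `j` of `L`
(`row_sum_sq`). If the total equals the sum of the minimum values, all these nonnegative excesses
vanish.
-/

open MeasureTheory ProbabilityTheory Finset

lemma memLp_coord {J K : ℕ} (p : Fin J × Fin K) (c : ℝ) :
    MemLp (fun ω : (Fin J × Fin K) → ℝ => c * ω p) 2
      (Measure.pi fun _ : Fin J × Fin K => gaussianReal 0 1) :=
  ((memLp_id_gaussianReal' (μ := 0) (v := 1) 2 (by simp)).comp_measurePreserving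
    (measurePreserving_eval (fun _ : Fin J × Fin K => gaussianReal 0 1) p)).const_mul c

lemma memLp_linear_form {J K : ℕ} (k : Fin K) (c : Fin J → ℝ) :
    MemLp (fun ω : (Fin J × Fin K) → ℝ => ∑ i, c i * ω (i, k)) 2
      (Measure.pi fun _ : Fin J × Fin K => gaussianReal 0 1) :=
  memLp_finsetSum _ fun i _ => memLp_coord (i, k) (c i)

lemma integral_coord {J K : ℕ} (p : Fin J × Fin K) :
    ∫ ω : (Fin J × Fin K) → ℝ, ω p ∂(Measure.pi fun _ : Fin J × Fin K => gaussianReal 0 1) = 0 := by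
  rw [integral_comp_eval (μ := fun _ : Fin J × Fin K => gaussianReal 0 1) (f := fun x : ℝ => x)
    (i := p) (by fun_prop)]
  simp

lemma variance_coord {J K : ℕ} (p : Fin J × Fin K) :
    variance (fun ω : (Fin J × Fin K) → ℝ => ω p)
      (Measure.pi fun _ : Fin J × Fin K => gaussianReal 0 1) = 1 := by
  have h := (measurePreserving_eval (fun _ : Fin J × Fin K => gaussianReal 0 1) p).map_eq
  have h2 := variance_map (X := fun x : ℝ => x) (Y := Function.eval p)
    (μ := Measure.pi fun _ : Fin J × Fin K => gaussianReal 0 1) (by fun_prop) (measurable_pi_apply p).aemeasurable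
  rw [h, variance_fun_id_gaussianReal] at h2
  simpa [Function.comp_def] using h2.symm

/-- The second moment of a linear form in one column of `G`: the form is centred, so this is its
variance, and the variance is additive over the independent coordinates. -/
lemma integral_sq_linear_form {J K : ℕ} (k : Fin K) (c : Fin J → ℝ) :
    ∫ ω : (Fin J × Fin K) → ℝ, (∑ i, c i * ω (i, k)) ^ 2
      ∂(Measure.pi fun _ : Fin J × Fin K => gaussianReal 0 1) = ∑ i, c i ^ 2 := by
  have hind : iIndepFun (fun (p : Fin J × Fin K) (ω : (Fin J × Fin K) → ℝ) => ω p)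
      (Measure.pi fun _ : Fin J × Fin K => gaussianReal 0 1) :=
    iIndepFun_pi (X := fun _ x => x) fun _ => by fun_prop
  have hmean : ∫ ω : (Fin J × Fin K) → ℝ, (∑ i, c i * ω (i, k))
      ∂(Measure.pi fun _ : Fin J × Fin K => gaussianReal 0 1) = 0 := by
    rw [integral_finsetSum _ fun i _ => (memLp_coord (i, k) (c i)).integrable (by norm_num)]
    simp [integral_const_mul, integral_coord]
  rw [← variance_of_integral_eq_zero (memLp_linear_form k c).aestronglyMeasurable.aemeasurable
    hmean]
  have hsum : (fun ω : (Fin J × Fin K) → ℝ => ∑ i, c i * ω (i, k))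
      = ∑ i, fun ω : (Fin J × Fin K) → ℝ => c i * ω (i, k) := by
    ext ω; simp
  rw [hsum, IndepFun.variance_sum (fun i _ => memLp_coord (i, k) (c i))]
  · refine Finset.sum_congr rfl fun i _ => ?_
    rw [variance_const_mul, variance_coord, mul_one]
  · intro i _ i' _ hne
    have hp : ((i, k) : Fin J × Fin K) ≠ (i', k) := fun h => hne (congrArg Prod.fst h)
    exact (hind.indepFun hp).comp (φ := fun x => c i * x) (ψ := fun x => c i' * x)
      (by fun_prop) (by fun_prop)

lemma sum_sq_ite_sub {J : ℕ} (j : Fin J) (b : Fin J → ℝ) (x : ℝ) :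
    ∑ i, ((if i = j then x else 0) - b i) ^ 2 = x ^ 2 - 2 * x * b j + ∑ i, b i ^ 2 := by
  have h : ∀ i, ((if i = j then x else 0) - b i) ^ 2
      = (if i = j then x ^ 2 - 2 * x * b i else 0) + b i ^ 2 := by
    intro i; split_ifs <;> ring
  simp [h, Finset.sum_add_distrib]

/-- Completing the square: the coefficients of row `j` contribute the minimum value plus `K` times
the squared distance of row `j` of `B` (here `b`) from the row-mean solution. -/
lemma row_sum_sq {J K : ℕ} (hK : 0 < K) (j : Fin J) (b : Fin J → ℝ) (l : Fin K → ℝ) :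
    ∑ k, ∑ i, ((if i = j then l k else 0) - b i) ^ 2
      = ((∑ k, l k ^ 2) - (1 / (K : ℝ)) * (∑ k, l k) ^ 2)
        + K * ∑ i, ((if i = j then (1 / (K : ℝ)) * ∑ k, l k else 0) - b i) ^ 2 := by
  have hK' : (K : ℝ) ≠ 0 := by positivity
  simp only [sum_sq_ite_sub, Finset.sum_add_distrib, Finset.sum_sub_distrib, ← Finset.sum_mul,
    ← Finset.mul_sum, Finset.sum_const, Finset.card_univ, Fintype.card_fin, nsmul_eq_mul]
  field_simp
  ring

/-- Uniqueness part of Lemma 1: if `B` attains the minimum expected squared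
Frobenius norm of `Δ(B) = L ∘ G − B * G`, then `B` is the diagonal matrix of row means of `L`. -/
theorem minimizer_is_diagonal_row_means
    (J K : ℕ) (hJ : 0 < J) (hK : 0 < K)
    (L : Fin J → Fin K → ℝ) (B : Matrix (Fin J) (Fin J) ℝ)
    (hmin : (∫ ω : (Fin J × Fin K) → ℝ,
        (∑ j : Fin J, ∑ k : Fin K,
          ((Matrix.hadamard (Matrix.of L) (Matrix.of fun j k => ω (j, k))
            - B * Matrix.of fun j k => ω (j, k)) j k) ^ 2)
        ∂(Measure.pi fun _ : Fin J × Fin K => gaussianReal 0 1))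
      = ∑ j : Fin J, ((∑ k : Fin K, (L j k) ^ 2)
          - (1 / (K : ℝ)) * (∑ k : Fin K, L j k) ^ 2)) :
    (∀ j : Fin J, B j j = (1 / (K : ℝ)) * ∑ k : Fin K, L j k)
    ∧ (∀ j i : Fin J, i ≠ j → B j i = 0) := by
  have hentry : ∀ (ω : (Fin J × Fin K) → ℝ) (j : Fin J) (k : Fin K),
      (Matrix.hadamard (Matrix.of L) (Matrix.of fun j k => ω (j, k))
        - B * Matrix.of fun j k => ω (j, k)) j k
      = ∑ i, ((if i = j then L j k else 0) - B j i) * ω (i, k) := by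
    intro ω j k
    simp [Matrix.mul_apply, sub_mul, Finset.sum_sub_distrib]
  simp only [hentry] at hmin
  rw [integral_finsetSum _ fun j _ => integrable_finsetSum _ fun k _ =>
    (memLp_linear_form k _).integrable_sq] at hmin
  simp_rw [integral_finsetSum _ fun k _ => (memLp_linear_form k _).integrable_sq,
    integral_sq_linear_form, row_sum_sq hK, Finset.sum_add_distrib] at hmin
  have hK' : (K : ℝ) ≠ 0 := by positivity
  have hexcess : ∑ j, (K : ℝ) *
      ∑ i, ((if i = j then (1 / (K : ℝ)) * ∑ k, L j k else 0) - B j i) ^ 2 = 0 := by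
    linarith
  have hB : ∀ j i, (if i = j then (1 / (K : ℝ)) * ∑ k, L j k else 0) = B j i := by
    intro j i
    have h1 := (Finset.sum_eq_zero_iff_of_nonneg fun j _ => by positivity).1 hexcess j
      (Finset.mem_univ j)
    have h2 := (Finset.sum_eq_zero_iff_of_nonneg fun i _ => by positivity).1
      ((mul_eq_zero.1 h1).resolve_left hK') i (Finset.mem_univ i)
    exact sub_eq_zero.1 (pow_eq_zero_iff two_ne_zero |>.1 h2)
  refine ⟨fun j => ?_, fun j i hij => ?_⟩
  · simpa using (hB j j).symm
  · simpa [hij] using (hB j i).symm
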